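/- Let 𝓜 be a standard module, let g ∈ D_𝓜, and let 𝓜' ⊆ 𝓜 be an ℛ-submodule with 𝔪𝓜 ⊆ 𝓜'. Write 𝓜̄ = 𝓜/𝔪𝓜, let 𝓜̄' be the image of 𝓜' in 𝓜̄, and let 𝓜̄^{(j)} be the image of 𝓜 ∩ z^j𝒪 in 𝓜̄. Assume dim_ℂ((𝓜̄' + 𝓜̄^{(g)})/(𝓜̄' + 𝓜̄^{(g+1)})) = 1 and that 𝓜̄ = 𝓜̄' ⊕ ℂm̄ for some m̄ ∈ 𝓜̄^{(g)} whose class generates the quotient (𝓜̄' + 𝓜̄^{(g)})/(𝓜̄' + 𝓜̄^{(g+1)}). Then 𝓜' is a standard module and D_{𝓜'} = D_𝓜 ∖ {g}. -/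

import Mathlib

open PowerSeries

noncomputable section

/-- `𝒪 = ℂ⟦z⟧`, the ring of formal power series over `ℂ`. -/
abbrev 𝒪 : Type := PowerSeries ℂ

/-- `ν(f)`: the order of a power series (least `n` with nonzero coefficient);
only meaningful for `f ≠ 0`. -/
noncomputable def ord (f : 𝒪) : ℕ := sInf {n : ℕ | PowerSeries.coeff n f ≠ 0}

/-- The value semigroup `Γ = {ν(x) : 0 ≠ x ∈ ℛ}` of a subalgebra `ℛ ⊆ 𝒪`. -/
def SGamma (R : Subalgebra ℂ 𝒪) : Set ℕ := {n | ∃ x ∈ R, x ≠ (0:𝒪) ∧ ord x = n}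

/-- The set of gaps `G = ℕ ∖ Γ`. -/
def Gaps (R : Subalgebra ℂ 𝒪) : Set ℕ := (SGamma R)ᶜ

/-- `Δ` is a `Γ`-module: `Γ + Δ ⊆ Δ`. -/
def IsGammaModule (Γ Δ : Set ℕ) : Prop := ∀ a ∈ Γ, ∀ d ∈ Δ, a + d ∈ Δ

/-- `Δ_𝓜 = {ν(x) : 0 ≠ x ∈ 𝓜}` for an `ℛ`-submodule `𝓜 ⊆ 𝒪`. -/
def DeltaM (R : Subalgebra ℂ 𝒪) (M : Submodule ↥R 𝒪) : Set ℕ :=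
  {n | ∃ x ∈ M, x ≠ (0:𝒪) ∧ ord x = n}

/-- `D_𝓜 = Δ_𝓜 ∩ G`, the set of added gaps. -/
def Dset (R : Subalgebra ℂ 𝒪) (M : Submodule ↥R 𝒪) : Set ℕ := DeltaM R M ∩ Gaps R

/-- A standard module: a finitely generated `ℛ`-submodule of `𝒪` containing an
element of order `0`. -/
def IsStd (R : Subalgebra ℂ 𝒪) (M : Submodule ↥R 𝒪) : Prop :=
  M.FG ∧ ∃ x ∈ M, x ≠ (0:𝒪) ∧ ord x = 0

/-- `c ≥ 1` is the conductor of `ℛ`: the minimal exponent with `z^c𝒪 ⊆ ℛ`. -/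
def HasConductor (R : Subalgebra ℂ 𝒪) (c : ℕ) : Prop :=
  1 ≤ c ∧ (∀ f : 𝒪, (PowerSeries.X : 𝒪)^c * f ∈ R) ∧
    ∀ c' : ℕ, (∀ f : 𝒪, (PowerSeries.X : 𝒪)^c' * f ∈ R) → c ≤ c'

/-- `z^j𝒪` as a `ℂ`-submodule of `𝒪`. -/
def zO (j : ℕ) : Submodule ℂ 𝒪 :=
  LinearMap.range (LinearMap.mulLeft ℂ ((PowerSeries.X : 𝒪)^j))

/-- `𝔪𝓜` as a `ℂ`-submodule of `𝒪`, where `𝔪 = {x ∈ ℛ : x = 0 or ν(x) > 0}`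
is the maximal ideal of `ℛ`. -/
def mSmul (R : Subalgebra ℂ 𝒪) (M : Submodule ↥R 𝒪) : Submodule ℂ 𝒪 :=
  Submodule.span ℂ {z : 𝒪 | ∃ r ∈ (R : Set 𝒪), ∃ y ∈ M, (r = 0 ∨ 0 < ord r) ∧ z = r * y}

/-- `dim_ℂ (A / B)` for `ℂ`-subspaces; intended for `B ≤ A`. -/
noncomputable def quotDim (A B : Submodule ℂ 𝒪) : ℕ :=
  Module.finrank ℂ (↥A ⧸ Submodule.comap A.subtype B)

/-- `D_i = D_0 ∪ {g_1, …, g_i}` (the gaps `g` are indexed by `1, …, m`). -/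
def DFlagSet (D0 : Set ℕ) (g : ℕ → ℕ) (i : ℕ) : Set ℕ := D0 ∪ g '' Set.Icc 1 i

/-- `(D_0, …, D_m)` with `D_i = D_0 ∪ {g_1 < … < g_i}` is a `D`-flag:
all `Δ_i = Γ ∪ D_i` are `Γ`-modules. -/
def IsDFlag (R : Subalgebra ℂ 𝒪) (m : ℕ) (D0 : Set ℕ) (g : ℕ → ℕ) : Prop :=
  D0 ⊆ Gaps R ∧ StrictMonoOn g (Set.Icc 1 m) ∧
  (∀ i, 1 ≤ i → i ≤ m → g i ∈ Gaps R \ D0) ∧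
  (∀ i ≤ m, IsGammaModule (SGamma R) (SGamma R ∪ DFlagSet D0 g i))

/-- A `D`-flag is admissible if it is realized by a flag of standard modules. -/
def IsAdmissibleFlag (R : Subalgebra ℂ 𝒪) (m : ℕ) (D0 : Set ℕ) (g : ℕ → ℕ) : Prop :=
  ∃ MM : ℕ → Submodule ↥R 𝒪, (∀ i, i < m → MM i ≤ MM (i+1)) ∧
    ∀ i ≤ m, IsStd R (MM i) ∧ Dset R (MM i) = DFlagSet D0 g i

/-- The subalgebra `ℂ[z^a, z^b + z^c] + z^N ℂ⟦z⟧` of `𝒪`. -/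
def Rring (a b c N : ℕ) : Subalgebra ℂ 𝒪 where
  carrier := {f : 𝒪 | ∃ p ∈ Algebra.adjoin ℂ
      ({(PowerSeries.X : 𝒪)^a, (PowerSeries.X : 𝒪)^b + (PowerSeries.X : 𝒪)^c} : Set 𝒪),
    ∃ g : 𝒪, f = p + (PowerSeries.X : 𝒪)^N * g}
  mul_mem' := by
    rintro x y ⟨p, hp, gx, rfl⟩ ⟨q, hq, gy, rfl⟩
    exact ⟨p * q, mul_mem hp hq,
      p * gy + gx * q + (PowerSeries.X : 𝒪)^N * (gx * gy), by ring⟩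
  one_mem' := ⟨1, one_mem _, 0, by ring⟩
  add_mem' := by
    rintro x y ⟨p, hp, gx, rfl⟩ ⟨q, hq, gy, rfl⟩
    exact ⟨p + q, add_mem hp hq, gx + gy, by ring⟩
  zero_mem' := ⟨0, zero_mem _, 0, by ring⟩
  algebraMap_mem' := fun r => ⟨algebraMap ℂ 𝒪 r, Subalgebra.algebraMap_mem _ r, 0, by ring⟩

/-- The ring `ℂ⟦z^4, z^{2u}+z^v⟧ = ℂ[z^4, z^{2u}+z^v] + z^{4u+v}ℂ⟦z⟧` for the
plane curve singularity with Puiseux exponents `(4, 2u, v)`. -/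
def Rcal (u v : ℕ) : Subalgebra ℂ 𝒪 := Rring 4 (2*u) v (4*u+v)

/-- The gap counting function `γ_Δ(ℓ) = |[ℓ,∞) ∖ Δ|`. -/
noncomputable def gapCount (Δ : Set ℕ) (ℓ : ℕ) : ℕ := Set.ncard {k : ℕ | ℓ ≤ k ∧ k ∉ Δ}

/-- `n = n(D)`: the smallest odd number in `(Δ ∪ {v}) ∩ [2u, ∞)`. -/
noncomputable def nOdd (u v : ℕ) (Δ : Set ℕ) : ℕ :=
  sInf {k : ℕ | Odd k ∧ 2*u ≤ k ∧ (k ∈ Δ ∨ k = v)}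

/-- The dimension change `μ_{D,g}` of Theorem `dimprop` (for the family `(4,2u,v)`),
where `Γ` is the value semigroup. -/
noncomputable def muDim (u v : ℕ) (Γ : Set ℕ) (D : Set ℕ) (gp : ℕ) : ℕ :=
  let Δ : Set ℕ := Γ ∪ D
  let Δ' : Set ℕ := Δ ∪ {gp}
  let n : ℕ := nOdd u v Δ
  if gp % 4 = 2 then
    (gapCount Δ' gp - gapCount Δ' (gp+4)) - (gapCount Δ' (gp+n) - gapCount Δ' (gp+4+n))
  else gapCount Δ' gp - gapCount Δ' (gp+4)


/-! The line spanned by `m̄` complements `𝓜'` and does not lie in `𝓜' + 𝓜 ∩ z^(g+1)𝒪`, so this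
intermediate space is `𝓜'` itself, while `𝓜' + 𝓜 ∩ z^g𝒪` is all of `𝓜`. Hence `𝓜` and `𝓜'`
have the same elements of order greater than `g`, and modulo `z^g𝒪` they agree, so that orders
less than `g` are also the same. An element of order `g` in `𝓜'` could be used to push every
element of `𝓜 ∩ z^g𝒪` into `𝓜 ∩ z^(g+1)𝒪 ⊆ 𝓜'`, giving `𝓜 = 𝓜'`. As `0` is not a gap, `𝓜'`
keeps an element `u` of order `0`; the conductor gives `z^c𝒪 = z^c𝒪u ⊆ ℛu`, so `𝓜'/ℛu` is
finite-dimensional and `𝓜'` is finitely generated. -/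

section OrderFiltration

variable {K : Type*}

/-- The `j`-th step `X ^ j K⟦X⟧` of the filtration of `K⟦X⟧` by order, as a `K`-submodule; it is
written so that `zO j` is `orderFiltration ℂ j` by definition. -/
def orderFiltration (K : Type*) [CommSemiring K] (j : ℕ) : Submodule K K⟦X⟧ :=
  LinearMap.range (LinearMap.mulLeft K ((X : K⟦X⟧) ^ j))

theorem mem_orderFiltration_iff [CommSemiring K] {j : ℕ} {f : K⟦X⟧} :
    f ∈ orderFiltration K j ↔ ∀ k < j, coeff k f = 0 := by
  rw [← X_pow_dvd_iff]
  exact exists_congr fun _ => eq_comm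

theorem mem_orderFiltration_succ_iff [CommSemiring K] {j : ℕ} {f : K⟦X⟧} :
    f ∈ orderFiltration K (j + 1) ↔ f ∈ orderFiltration K j ∧ coeff j f = 0 := by
  simp only [mem_orderFiltration_iff, Nat.forall_lt_succ_right]

theorem orderFiltration_antitone [CommSemiring K] : Antitone (orderFiltration K) :=
  fun _ _ hij _ hf => mem_orderFiltration_iff.mpr fun k hk =>
    mem_orderFiltration_iff.mp hf k (hk.trans_le hij)

theorem orderFiltration_cofg [CommRing K] [IsNoetherianRing K] (j : ℕ) :
    (orderFiltration K j).CoFG := by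
  let firstCoeffs : K⟦X⟧ →ₗ[K] Fin j → K := LinearMap.pi fun i => coeff (i : ℕ)
  refine (Submodule.CoFG.ker firstCoeffs).of_le fun f hf => mem_orderFiltration_iff.mpr ?_
  exact fun k hk => congrFun (LinearMap.mem_ker.mp hf) ⟨k, hk⟩

/-- The set of finite orders of the elements of `S`. The order of `0` is `⊤`, so `0` does not
contribute; this is `Δ_𝓜` for a module `𝓜` and `Γ` for the ring `ℛ`. -/
def orderSet [Semiring K] (S : Set K⟦X⟧) : Set ℕ :=
  {n | ∃ f ∈ S, f.order = n}

theorem mem_orderSet_iff [CommSemiring K] {S : Set K⟦X⟧} {n : ℕ} :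
    n ∈ orderSet S ↔ ∃ f ∈ S, f ∈ orderFiltration K n ∧ coeff n f ≠ 0 := by
  simp only [orderSet, Set.mem_ofPred_eq, order_eq_nat, mem_orderFiltration_iff, and_comm]

theorem orderSet_mono [Semiring K] {S T : Set K⟦X⟧} (hST : S ⊆ T) : orderSet S ⊆ orderSet T :=
  fun _ ⟨f, hf, hn⟩ => ⟨f, hST hf, hn⟩

end OrderFiltration

section Subspaces

variable {K : Type*} [Field K] {N N' : Submodule K K⟦X⟧} {g : ℕ}

theorem notMem_orderSet_of_lt (hlt : N' < N) (hle : N ≤ N' ⊔ orderFiltration K g)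
    (hgt : N ⊓ orderFiltration K (g + 1) ≤ N') : g ∉ orderSet (N' : Set K⟦X⟧) := by
  rw [mem_orderSet_iff]
  rintro ⟨y, hy, hyg, hy0⟩
  refine hlt.not_ge fun x hx => ?_
  obtain ⟨y', hy', f, hf, rfl⟩ := Submodule.mem_sup.mp (hle hx)
  let a : K := coeff g f / coeff g y
  have hfN : f ∈ N := (N.add_mem_iff_right (hlt.le hy')).mp hx
  have hcancel : coeff g (f - a • y) = 0 := by simp [a, hy0]
  have hrem : f - a • y ∈ N' :=
    hgt ⟨sub_mem hfN (N.smul_mem a (hlt.le hy)),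
      mem_orderFiltration_succ_iff.mpr ⟨sub_mem hf (Submodule.smul_mem _ a hyg), hcancel⟩⟩
  have hfN' : f ∈ N' := by simpa using add_mem hrem (N'.smul_mem a hy)
  exact add_mem hy' hfN'

theorem orderSet_eq_sdiff_singleton (hlt : N' < N) (hle : N ≤ N' ⊔ orderFiltration K g)
    (hgt : N ⊓ orderFiltration K (g + 1) ≤ N') :
    orderSet (N' : Set K⟦X⟧) = orderSet (N : Set K⟦X⟧) \ {g} := by
  refine Set.Subset.antisymm
    (Set.subset_sdiff_singleton (orderSet_mono hlt.le) (notMem_orderSet_of_lt hlt hle hgt)) ?_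
  rintro n ⟨hn, hng⟩
  obtain ⟨x, hx, hxn, hx0⟩ := mem_orderSet_iff.mp hn
  rw [mem_orderSet_iff]
  rcases lt_or_gt_of_ne hng with hn_lt | hn_gt
  · obtain ⟨y, hy, f, hf, rfl⟩ := Submodule.mem_sup.mp (hle hx)
    obtain ⟨hfn, hf0⟩ := mem_orderFiltration_succ_iff.mp (orderFiltration_antitone hn_lt hf)
    exact ⟨y, hy, (Submodule.add_mem_iff_left _ hfn).mp hxn, by simpa [hf0] using hx0⟩
  · exact ⟨x, hgt ⟨hx, orderFiltration_antitone hn_gt hxn⟩, hxn, hx0⟩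

theorem orderSet_eq_sdiff_singleton_of_eq_sup_span {m : K⟦X⟧}
    (hm : m ∈ N ⊓ orderFiltration K g ⊔ N') (hN : N = N' ⊔ K ∙ m)
    (hm' : m ∉ N' ⊔ N ⊓ orderFiltration K (g + 1)) :
    orderSet (N' : Set K⟦X⟧) = orderSet (N : Set K⟦X⟧) \ {g} := by
  have hmN' : m ∉ N' := fun h => hm' (Submodule.mem_sup_left h)
  have hcov : N' ⋖ N := by
    rw [hN, sup_comm]
    exact Submodule.covBy_span_singleton_sup hmN'
  have hmN : m ∈ N := hN ▸ Submodule.mem_sup_right (Submodule.mem_span_singleton_self m)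
  refine orderSet_eq_sdiff_singleton hcov.lt ?_ ?_
  · rw [hN, sup_le_iff, Submodule.span_singleton_le_iff_mem, sup_comm N']
    exact ⟨le_sup_right, sup_le_sup_right (inf_le_right (a := N)) _ hm⟩
  · have hsup : N' ⊔ N ⊓ orderFiltration K (g + 1) = N' :=
      (hcov.eq_or_eq le_sup_left (sup_le hcov.le inf_le_left)).resolve_right
        fun h => hm' (h.symm ▸ hmN)
    exact sup_eq_left.mp hsup

end Subspaces

section FinitelyGenerated

theorem fg_of_le_of_restrictScalars_cofg {K A E : Type*} [CommRing K] [IsNoetherianRing K]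
    [Ring A] [Algebra K A] [AddCommGroup E] [Module K E] [Module A E] [IsScalarTower K A E]
    {N P : Submodule A E} (hNP : N ≤ P) (hN : N.FG) (hcofg : (N.restrictScalars K).CoFG) :
    P.FG := by
  have : Module.Finite K (E ⧸ N) :=
    Module.Finite.equiv (Submodule.Quotient.restrictScalarsEquiv K N)
  have : IsNoetherian A (E ⧸ N) := isNoetherian_of_tower K inferInstance
  refine Submodule.fg_of_fg_map_of_fg_inf_ker N.mkQ (IsNoetherian.noetherian _) ?_
  rwa [N.ker_mkQ, inf_eq_right.mpr hNP]

variable {K : Type*} [Field K] {R : Subalgebra K K⟦X⟧} {c : ℕ}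

theorem orderFiltration_le_span_singleton (hR : ∀ f : K⟦X⟧, X ^ c * f ∈ R) {u : K⟦X⟧}
    (hu : u.order = 0) : orderFiltration K c ≤ (R ∙ u).restrictScalars K := by
  rintro _ ⟨f, rfl⟩
  have hu0 : constantCoeff u ≠ 0 := order_ne_zero_iff_constCoeff_eq_zero.not_right.mp hu
  refine Submodule.mem_span_singleton.mpr ⟨⟨X ^ c * (f * u⁻¹), hR _⟩, ?_⟩
  simp [Subalgebra.smul_def, mul_assoc, PowerSeries.inv_mul_cancel u hu0]

theorem fg_of_zero_mem_orderSet (hR : ∀ f : K⟦X⟧, X ^ c * f ∈ R) {M : Submodule R K⟦X⟧}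
    (hM : 0 ∈ orderSet (M : Set K⟦X⟧)) : M.FG := by
  obtain ⟨u, huM, hu⟩ := hM
  exact fg_of_le_of_restrictScalars_cofg (K := K)
    ((Submodule.span_singleton_le_iff_mem u M).mpr huM) (Submodule.fg_span_singleton u)
    ((orderFiltration_cofg c).of_le (orderFiltration_le_span_singleton hR hu))

end FinitelyGenerated

theorem statement6_general {K : Type*} [Field K] {R : Subalgebra K K⟦X⟧} {c : ℕ}
    (hR : ∀ f : K⟦X⟧, X ^ c * f ∈ R) {M M' : Submodule R K⟦X⟧}
    (hM : 0 ∈ orderSet (M : Set K⟦X⟧)) {g : ℕ} (hg : g ≠ 0) {m : K⟦X⟧}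
    (hm : m ∈ M.restrictScalars K ⊓ orderFiltration K g ⊔ M'.restrictScalars K)
    (hsum : M.restrictScalars K = M'.restrictScalars K ⊔ K ∙ m)
    (hgen : m ∉ M'.restrictScalars K ⊔ M.restrictScalars K ⊓ orderFiltration K (g + 1)) :
    M'.FG ∧ 0 ∈ orderSet (M' : Set K⟦X⟧) ∧
      orderSet (M' : Set K⟦X⟧) = orderSet (M : Set K⟦X⟧) \ {g} := by
  have hΔ : orderSet (M' : Set K⟦X⟧) = orderSet (M : Set K⟦X⟧) \ {g} :=
    orderSet_eq_sdiff_singleton_of_eq_sup_span hm hsum hgen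
  have h0 : 0 ∈ orderSet (M' : Set K⟦X⟧) := hΔ ▸ ⟨hM, hg.symm⟩
  exact ⟨fg_of_zero_mem_orderSet hR h0, h0, hΔ⟩

theorem order_eq_ord {f : 𝒪} (hf : f ≠ 0) : f.order = ord f :=
  order_eq_nat.mpr ⟨Nat.sInf_mem (exists_coeff_ne_zero_iff_ne_zero.mpr hf),
    fun _ hk => not_not.mp (Nat.notMem_of_lt_sInf hk)⟩

theorem ne_zero_and_ord_eq_iff {f : 𝒪} {n : ℕ} : f ≠ 0 ∧ ord f = n ↔ f.order = n := by
  rcases eq_or_ne f 0 with rfl | hf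
  · simp
  · simp [hf, order_eq_ord hf]

theorem DeltaM_eq_orderSet (R : Subalgebra ℂ 𝒪) (M : Submodule R 𝒪) :
    DeltaM R M = orderSet (M : Set 𝒪) := by
  simp only [DeltaM, orderSet, ne_zero_and_ord_eq_iff, SetLike.mem_coe]

theorem ne_zero_of_mem_Gaps {R : Subalgebra ℂ 𝒪} {n : ℕ} (hn : n ∈ Gaps R) : n ≠ 0 := by
  rintro rfl
  exact hn ⟨1, one_mem R, ne_zero_and_ord_eq_iff.mpr order_one⟩

/-- Nakayama-type lemma: if `𝓜' ⊆ 𝓜` with `𝔪𝓜 ⊆ 𝓜'`, `g ∈ D_𝓜`,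
`dim((𝓜̄'+𝓜̄^{(g)})/(𝓜̄'+𝓜̄^{(g+1)})) = 1`, and `𝓜̄ = 𝓜̄' ⊕ ℂm̄` for `m̄ ∈ 𝓜̄^{(g)}`
whose class generates that quotient, then `𝓜'` is a standard module with
`D_{𝓜'} = D_𝓜 ∖ {g}`. (Bar-space statements are encoded inside `𝒪` using `𝔪𝓜 ⊆ 𝓜'`.) -/
theorem statement6 (R : Subalgebra ℂ 𝒪) (c : ℕ) (hR : HasConductor R c)
    (M M' : Submodule ↥R 𝒪) (hstd : IsStd R M)
    (gp : ℕ) (hg : gp ∈ Dset R M)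
    (hsub : M' ≤ M) (hmM : mSmul R M ≤ M'.restrictScalars ℂ)
    (hdim : quotDim (M'.restrictScalars ℂ ⊔ ((M.restrictScalars ℂ) ⊓ zO gp))
                    (M'.restrictScalars ℂ ⊔ ((M.restrictScalars ℂ) ⊓ zO (gp+1))) = 1)
    (mbar : 𝒪)
    (hmbar : mbar ∈ ((M.restrictScalars ℂ) ⊓ zO gp) ⊔ mSmul R M)
    (hdirect : mbar ∉ M'.restrictScalars ℂ)
    (hsum : M.restrictScalars ℂ = M'.restrictScalars ℂ ⊔ (ℂ ∙ mbar))
    (hgen : mbar ∉ M'.restrictScalars ℂ ⊔ ((M.restrictScalars ℂ) ⊓ zO (gp+1))) :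
    IsStd R M' ∧ Dset R M' = Dset R M \ {gp} := by
  obtain ⟨hfg, h0, hΔ⟩ := statement6_general hR.2.1 (DeltaM_eq_orderSet R M ▸ hstd.2)
    (ne_zero_of_mem_Gaps hg.2) (sup_le_sup_left hmM _ hmbar) hsum hgen
  simp only [← DeltaM_eq_orderSet] at h0 hΔ
  exact ⟨⟨hfg, h0⟩, by simp only [Dset, hΔ, Set.sdiff_inter_right_comm]⟩

end
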